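/- Equip ℬ ⊗ ℬ with the product (x ⊗ y) ⋆ (x' ⊗ y') = (x ⋆ x') ⊗ (y ⋆ y'). Then Δ is a morphism of algebras: Δ(u ⋆ v) = Δ(u) ⋆ Δ(v) for all u, v ∈ ℬ, and ε*(u ⋆ v) = ε*(u)·ε*(v). -/

import Mathlib

open scoped BigOperators

structure BD where
  lam : List ℕ
  up : Finset ℕ
  dn : Finset ℕ
  ed : Finset (ℕ × ℕ)
deriving DecidableEq

namespace BD

/-- number of vertices -/
def nv (G : BD) : ℕ := G.lam.length

/-- number of half-edges -/
def omega (G : BD) : ℕ := G.lam.sum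

/-- the vertex to which a half-edge belongs -/
def v (G : BD) (k : ℕ) : ℕ :=
  (List.range G.lam.length).countP (fun i => (G.lam.take i).sum < k)

def Valid (G : BD) : Prop :=
  (∀ x ∈ G.lam, 0 < x) ∧
  G.up ⊆ Finset.Icc 1 G.omega ∧
  G.dn ⊆ Finset.Icc 1 G.omega ∧
  (∀ p ∈ G.ed, p.1 ∈ G.up ∧ p.2 ∈ G.dn ∧ G.v p.1 < G.v p.2) ∧
  (∀ p ∈ G.ed, ∀ q ∈ G.ed, p.1 = q.1 → p = q) ∧
  (∀ p ∈ G.ed, ∀ q ∈ G.ed, p.2 = q.2 → p = q)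

def eps : BD := ⟨[], ∅, ∅, ∅⟩

theorem eps_valid : eps.Valid := by
  refine ⟨?_, ?_, ?_, ?_, ?_, ?_⟩ <;> simp [eps, Valid, omega]

def HfUp (G : BD) : Finset ℕ := G.up \ G.ed.image Prod.fst
def HfDn (G : BD) : Finset ℕ := G.dn \ G.ed.image Prod.snd
def hfUp (G : BD) : ℕ := G.HfUp.card
def hfDn (G : BD) : ℕ := G.HfDn.card
def hc (G : BD) : ℕ :=
  (G.omega - G.ed.card - G.hfUp) + (G.omega - G.ed.card - G.hfDn)

/-- composition of `G'` over `G` along a matching `s` -/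
def comp (G G' : BD) (s : Finset (ℕ × ℕ)) : BD where
  lam := G.lam ++ G'.lam
  up := G.up ∪ G'.up.image (· + G.omega)
  dn := G.dn ∪ G'.dn.image (· + G.omega)
  ed := G.ed ∪ s.image (fun p => (p.1, p.2 + G.omega)) ∪
        G'.ed.image (fun p => (p.1 + G.omega, p.2 + G.omega))

/-- `s` encodes a strictly increasing sequence `a₁ < ⋯ < a_k` of elements of `H_f↑(G)`
matched with pairwise distinct elements `b₁,…,b_k` of `H_f↓(G')`. -/
def Matching (G G' : BD) (s : Finset (ℕ × ℕ)) : Prop :=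
  (∀ p ∈ s, p.1 ∈ G.HfUp ∧ p.2 ∈ G'.HfDn) ∧
  (∀ p ∈ s, ∀ q ∈ s, p.1 = q.1 → p = q) ∧
  (∀ p ∈ s, ∀ q ∈ s, p.2 = q.2 → p = q)

open scoped Classical in
noncomputable def matchings (G G' : BD) : Finset (Finset (ℕ × ℕ)) :=
  (G.HfUp ×ˢ G'.HfDn).powerset.filter (fun s => Matching G G' s)

/-- juxtaposition -/
def juxt (G G' : BD) : BD := comp G G' ∅

def Indiv (G : BD) : Prop :=
  ∀ G₁ G₂ : BD, G₁.Valid → G₂.Valid → G = juxt G₁ G₂ → G₁ = G ∨ G₂ = G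

/-- half-edges attached to the vertices in `I` -/
def HI (G : BD) (I : Finset ℕ) : Finset ℕ :=
  (Finset.Icc 1 G.omega).filter (fun k => G.v k ∈ I)

/-- the increasing relabelling bijection -/
def phi (G : BD) (I : Finset ℕ) (k : ℕ) : ℕ := ((G.HI I).filter (· ≤ k)).card

/-- sub-B-diagram on the set of vertices `I` -/
def sub (G : BD) (I : Finset ℕ) : BD where
  lam := ((List.range G.lam.length).filter (fun i => i + 1 ∈ I)).map (fun i => G.lam.getD i 0)
  up := (G.up ∩ G.HI I).image (G.phi I)
  dn := (G.dn ∩ G.HI I).image (G.phi I)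
  ed := (G.ed.filter (fun p => G.v p.1 ∈ I ∧ G.v p.2 ∈ I)).image
          (fun p => (G.phi I p.1, G.phi I p.2))

def Isolated (G : BD) (I : Finset ℕ) : Prop :=
  ∀ p ∈ G.ed, (G.v p.1 ∈ I ↔ G.v p.2 ∈ I)

def Connected (G : BD) : Prop :=
  ∀ i j : ℕ, 1 ≤ i → i < j → j ≤ G.nv →
    ∃ (k : ℕ) (c : Fin (k + 1) → ℕ × ℕ),
      (∀ ℓ, c ℓ ∈ G.ed) ∧
      (i = G.v (c 0).1 ∨ i = G.v (c 0).2) ∧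
      (j = G.v (c (Fin.last k)).1 ∨ j = G.v (c (Fin.last k)).2) ∧
      ∀ ℓ : Fin k,
        G.v (c ℓ.castSucc).1 = G.v (c ℓ.succ).1 ∨ G.v (c ℓ.castSucc).1 = G.v (c ℓ.succ).2 ∨
        G.v (c ℓ.castSucc).2 = G.v (c ℓ.succ).1 ∨ G.v (c ℓ.castSucc).2 = G.v (c ℓ.succ).2

def IsConnComp (G : BD) (I : Finset ℕ) : Prop :=
  I ⊆ Finset.Icc 1 G.nv ∧ I.Nonempty ∧ (G.sub I).Connected ∧
  ∀ J : Finset ℕ, I ⊆ J → J ⊆ Finset.Icc 1 G.nv → (G.sub J).Connected → J = I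

end BD

open scoped TensorProduct

/-- B-diagrams -/
abbrev BDiagram := {G : BD // G.Valid}

/-- the free `ℂ`-vector space on the set of B-diagrams -/
abbrev BSpace := BDiagram →₀ ℂ

open scoped Classical in
noncomputable def mkB (G : BD) : BSpace :=
  if h : G.Valid then Finsupp.single ⟨G, h⟩ 1 else 0

noncomputable def unitB : BSpace := Finsupp.single ⟨BD.eps, BD.eps_valid⟩ 1

noncomputable def liftB {V : Type*} [AddCommMonoid V] [Module ℂ V] (f : BDiagram → V) :
    BSpace →ₗ[ℂ] V :=
  Finsupp.lsum ℂ fun A => LinearMap.toSpanSingleton ℂ V (f A)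

noncomputable def mulfun (A B : BDiagram) : BSpace :=
  ∑ s ∈ BD.matchings A.1 B.1, mkB (BD.comp A.1 B.1 s)

/-- the product ⋆ of the algebra of B-diagrams, as a bilinear map -/
noncomputable def starB : BSpace →ₗ[ℂ] BSpace →ₗ[ℂ] BSpace :=
  liftB fun A => liftB fun B => mulfun A B

open scoped Classical in
/-- the coproduct evaluated on a B-diagram -/
noncomputable def dfun (A : BDiagram) : BSpace ⊗[ℂ] BSpace :=
  ∑ I ∈ (Finset.Icc 1 A.1.nv).powerset.filter (fun I => A.1.Isolated I),
    mkB (A.1.sub I) ⊗ₜ[ℂ] mkB (A.1.sub (Finset.Icc 1 A.1.nv \ I))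

/-- the coproduct Δ of ℬ -/
noncomputable def deltaL : BSpace →ₗ[ℂ] BSpace ⊗[ℂ] BSpace := liftB dfun

/-- the counit of ℬ -/
noncomputable def counitB : BSpace →ₗ[ℂ] ℂ :=
  liftB fun A => if A.1 = BD.eps then (1 : ℂ) else 0

/-- the product of ℬ as a linear map on the tensor square -/
noncomputable def muB : BSpace ⊗[ℂ] BSpace →ₗ[ℂ] BSpace := TensorProduct.lift starB

/-- the componentwise product `(x ⊗ y) ⋆ (x' ⊗ y') = (x ⋆ x') ⊗ (y ⋆ y')` on ℬ ⊗ ℬ -/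
noncomputable def star2 (x y : BSpace ⊗[ℂ] BSpace) : BSpace ⊗[ℂ] BSpace :=
  TensorProduct.map muB muB
    (TensorProduct.tensorTensorTensorComm ℂ BSpace BSpace BSpace BSpace (x ⊗ₜ[ℂ] y))

/-!
Let `s` be a matching used to compose `B` over `A`. A set of vertices of `A.comp B s` is a pair
`(I, J)` of sets of vertices of `A` and of `B`. It is isolated exactly when `I` and `J` are
isolated and every pair of `s` joins `I` to `J` or the complement of `I` to the complement of `J`.
Such an `s` is the same thing as a matching of the sub-diagrams on `I` and `J` together with a
matching of the sub-diagrams on the complements, and composition commutes with passing to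
sub-diagrams. Hence `Δ(A ⋆ B)` and `Δ(A) ⋆ Δ(B)` are sums of the same terms over the same data.
The counit only sees the term of `A ⋆ B` equal to `ε`, and a composition is empty only if both
factors are.
-/

section PartialMatching

open Finset

variable {α β γ δ : Type*}

/-- A partial matching between the finite sets `X` and `Y`, given by its graph `s`: a bijection from
a subset of `X` onto a subset of `Y`. -/
structure IsPartialMatching (X : Finset α) (Y : Finset β) (s : Finset (α × β)) : Prop where
  subset : s ⊆ X ×ˢ Y
  injOn_fst : Set.InjOn Prod.fst (s : Set (α × β))
  injOn_snd : Set.InjOn Prod.snd (s : Set (α × β))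

namespace IsPartialMatching

variable {X X' : Finset α} {Y Y' : Finset β} {s t : Finset (α × β)}

theorem fst_mem (hs : IsPartialMatching X Y s) {p : α × β} (hp : p ∈ s) : p.1 ∈ X :=
  (mem_product.1 (hs.subset hp)).1

theorem snd_mem (hs : IsPartialMatching X Y s) {p : α × β} (hp : p ∈ s) : p.2 ∈ Y :=
  (mem_product.1 (hs.subset hp)).2

theorem image_fst_image_snd [DecidableEq α] [DecidableEq β] (hs : IsPartialMatching X Y s) :
    IsPartialMatching (s.image Prod.fst) (s.image Prod.snd) s :=
  ⟨subset_product, hs.injOn_fst, hs.injOn_snd⟩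

theorem mono (hs : IsPartialMatching X Y s) (hX : X ⊆ X') (hY : Y ⊆ Y') :
    IsPartialMatching X' Y' s :=
  ⟨hs.subset.trans (product_subset_product hX hY), hs.injOn_fst, hs.injOn_snd⟩

theorem filter (hs : IsPartialMatching X Y s) (P : α → Prop) (Q : β → Prop) [DecidablePred P]
    [DecidablePred Q] :
    IsPartialMatching {x ∈ X | P x} {y ∈ Y | Q y} {p ∈ s | P p.1 ∧ Q p.2} where
  subset := by rw [← filter_product]; exact filter_subset_filter _ hs.subset
  injOn_fst := hs.injOn_fst.mono (coe_subset.2 (filter_subset _ _))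
  injOn_snd := hs.injOn_snd.mono (coe_subset.2 (filter_subset _ _))

theorem union [DecidableEq α] [DecidableEq β] (hs : IsPartialMatching X Y s)
    (ht : IsPartialMatching X' Y' t) (hX : Disjoint X X') (hY : Disjoint Y Y') :
    IsPartialMatching (X ∪ X') (Y ∪ Y') (s ∪ t) where
  subset := union_subset (hs.mono subset_union_left subset_union_left).subset
    (ht.mono subset_union_right subset_union_right).subset
  injOn_fst p hp q hq h := by
    rcases mem_union.1 hp with hp | hp <;> rcases mem_union.1 hq with hq | hq
    · exact hs.injOn_fst hp hq h
    · exact (disjoint_left.1 hX (hs.fst_mem hp) (h ▸ ht.fst_mem hq)).elim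
    · exact (disjoint_left.1 hX (hs.fst_mem hq) (h ▸ ht.fst_mem hp)).elim
    · exact ht.injOn_fst hp hq h
  injOn_snd p hp q hq h := by
    rcases mem_union.1 hp with hp | hp <;> rcases mem_union.1 hq with hq | hq
    · exact hs.injOn_snd hp hq h
    · exact (disjoint_left.1 hY (hs.snd_mem hp) (h ▸ ht.snd_mem hq)).elim
    · exact (disjoint_left.1 hY (hs.snd_mem hq) (h ▸ ht.snd_mem hp)).elim
    · exact ht.injOn_snd hp hq h

end IsPartialMatching

theorem injOn_prodMap_product {f : α → γ} {g : β → δ} {X : Finset α} {Y : Finset β}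
    (hf : Set.InjOn f X) (hg : Set.InjOn g Y) : Set.InjOn (Prod.map f g) (X ×ˢ Y : Finset _) := by
  rw [coe_product]
  exact hf.prodMap hg

theorem isPartialMatching_image_iff [DecidableEq γ] [DecidableEq δ] {f : α → γ} {g : β → δ}
    {X : Finset α} {Y : Finset β} {s : Finset (α × β)} (hf : Set.InjOn f X) (hg : Set.InjOn g Y)
    (hsub : s ⊆ X ×ˢ Y) :
    IsPartialMatching (X.image f) (Y.image g) (s.image (Prod.map f g)) ↔
      IsPartialMatching X Y s := by
  have hfg : Set.InjOn (Prod.map f g) s := (injOn_prodMap_product hf hg).mono hsub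
  constructor
  · rintro ⟨-, h₁, h₂⟩
    rw [coe_image] at h₁ h₂
    refine ⟨hsub, ?_, ?_⟩
    · exact Set.InjOn.of_comp (g := f) (h₁.comp hfg (Set.mapsTo_image _ _))
    · exact Set.InjOn.of_comp (g := g) (h₂.comp hfg (Set.mapsTo_image _ _))
  · intro hs
    refine ⟨?_, ?_, ?_⟩
    · rw [← prodMap_image_product]
      exact image_subset_image hsub
    · rw [coe_image]
      exact Set.InjOn.image_of_comp (g := Prod.fst) (hf.comp hs.injOn_fst fun _ => hs.fst_mem)
    · rw [coe_image]
      exact Set.InjOn.image_of_comp (g := Prod.snd) (hg.comp hs.injOn_snd fun _ => hs.snd_mem)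

open scoped Classical in
/-- The finite set of all partial matchings between `X` and `Y`. -/
noncomputable def partialMatchings (X : Finset α) (Y : Finset β) : Finset (Finset (α × β)) :=
  {s ∈ (X ×ˢ Y).powerset | IsPartialMatching X Y s}

theorem mem_partialMatchings {X : Finset α} {Y : Finset β} {s : Finset (α × β)} :
    s ∈ partialMatchings X Y ↔ IsPartialMatching X Y s := by
  simpa [partialMatchings] using IsPartialMatching.subset

theorem sum_partialMatchings_image [DecidableEq γ] [DecidableEq δ] {M : Type*} [AddCommMonoid M]
    {f : α → γ} {g : β → δ} {X : Finset α} {Y : Finset β} (hf : Set.InjOn f X)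
    (hg : Set.InjOn g Y) (F : Finset (γ × δ) → M) :
    ∑ t ∈ partialMatchings (X.image f) (Y.image g), F t =
      ∑ s ∈ partialMatchings X Y, F (s.image (Prod.map f g)) := by
  have himage : partialMatchings (X.image f) (Y.image g) =
      (partialMatchings X Y).image (·.image (Prod.map f g)) := by
    ext t
    simp only [mem_image, mem_partialMatchings]
    constructor
    · intro ht
      have hsub := ht.subset
      rw [← prodMap_image_product] at hsub
      obtain ⟨s, hs, rfl⟩ := subset_image_iff.1 hsub
      exact ⟨s, (isPartialMatching_image_iff hf hg (coe_subset.1 hs)).1 ht, rfl⟩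
    · rintro ⟨s, hs, rfl⟩
      exact (isPartialMatching_image_iff hf hg hs.subset).2 hs
  have hinj : Set.InjOn (·.image (Prod.map f g)) (partialMatchings X Y : Set (Finset (α × β))) :=
    (image_injOn_powerset_of_injOn (injOn_prodMap_product hf hg)).mono
      fun s hs => mem_powerset.2 (mem_partialMatchings.1 hs).subset
  rw [himage, sum_image hinj]

theorem sum_partialMatchings_cut {M : Type*} [AddCommMonoid M] {X : Finset α} {Y : Finset β}
    {P P' : α → Prop} {Q Q' : β → Prop} [DecidablePred P] [DecidablePred P'] [DecidablePred Q]
    [DecidablePred Q'] (hP : ∀ x ∈ X, P' x ↔ ¬P x) (hQ : ∀ y ∈ Y, Q' y ↔ ¬Q y)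
    (F : Finset (α × β) → Finset (α × β) → M) :
    ∑ s ∈ partialMatchings X Y with ∀ p ∈ s, (P p.1 ↔ Q p.2),
        F {p ∈ s | P p.1 ∧ Q p.2} {p ∈ s | P' p.1 ∧ Q' p.2} =
      ∑ t ∈ partialMatchings {x ∈ X | P x} {y ∈ Y | Q y},
        ∑ t' ∈ partialMatchings {x ∈ X | P' x} {y ∈ Y | Q' y}, F t t' := by
  classical
  rw [← sum_product']
  refine sum_nbij' (fun s => ({p ∈ s | P p.1 ∧ Q p.2}, {p ∈ s | P' p.1 ∧ Q' p.2}))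
    (fun t => t.1 ∪ t.2) ?_ ?_ ?_ ?_ fun _ _ => rfl
  · intro s hs
    simp only [mem_product, mem_filter, mem_partialMatchings] at hs ⊢
    exact ⟨hs.1.filter P Q, hs.1.filter P' Q'⟩
  · rintro ⟨t, t'⟩ ht
    simp only [mem_product, mem_filter, mem_partialMatchings] at ht ⊢
    obtain ⟨ht, ht'⟩ := ht
    refine ⟨(ht.union ht' ?_ ?_).mono ?_ ?_, fun p hp => ?_⟩
    · exact disjoint_filter.2 fun x hx h h' => (hP x hx).1 h' h
    · exact disjoint_filter.2 fun y hy h h' => (hQ y hy).1 h' h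
    · exact union_subset (filter_subset _ _) (filter_subset _ _)
    · exact union_subset (filter_subset _ _) (filter_subset _ _)
    · rcases mem_union.1 hp with h | h
      · have := mem_filter.1 (ht.fst_mem h)
        have := mem_filter.1 (ht.snd_mem h)
        tauto
      · have := mem_filter.1 (ht'.fst_mem h)
        have := mem_filter.1 (ht'.snd_mem h)
        grind
  · intro s hs
    simp only [mem_filter, mem_partialMatchings] at hs
    ext p
    have := hs.1.fst_mem (p := p)
    have := hs.1.snd_mem (p := p)
    grind
  · rintro ⟨t, t'⟩ ht
    simp only [mem_product, mem_partialMatchings] at ht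
    have h₁ (p : α × β) := And.intro (ht.1.fst_mem (p := p)) (ht.1.snd_mem (p := p))
    have h₂ (p : α × β) := And.intro (ht.2.fst_mem (p := p)) (ht.2.snd_mem (p := p))
    ext p <;> grind

end PartialMatching

namespace BD

open Finset

variable {G A B : BD} {s : Finset (ℕ × ℕ)} {I J K : Finset ℕ} {k : ℕ}

attribute [ext] BD

section Composition

variable (A B s)

theorem nv_comp : (A.comp B s).nv = A.nv + B.nv := List.length_append

theorem omega_comp : (A.comp B s).omega = A.omega + B.omega := List.sum_append

end Composition

section Owner

theorem v_le_nv (G : BD) (k : ℕ) : G.v k ≤ G.nv :=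
  List.countP_le_length.trans_eq List.length_range

theorem one_le_v (hk : k ∈ Icc 1 G.omega) : 1 ≤ G.v k := by
  obtain ⟨h₁, h₂⟩ := mem_Icc.1 hk
  have hlam : 0 < G.lam.length := List.length_pos_of_sum_pos _ (show 0 < G.omega by lia)
  exact List.countP_pos_iff.2 ⟨0, List.mem_range.2 hlam, decide_eq_true h₁⟩

theorem v_comp_left (A B : BD) (s) (hk : k ≤ A.omega) : (A.comp B s).v k = A.v k := by
  have hright : (List.range B.lam.length).countP
      ((fun i => decide (((A.lam ++ B.lam).take i).sum < k)) ∘ (A.lam.length + ·)) = 0 := by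
    refine List.countP_eq_zero.2 fun i _ => ?_
    simp only [Function.comp_apply, List.take_length_add_append, List.sum_append, decide_eq_true_eq]
    change ¬ A.omega + _ < k
    lia
  change (List.range (A.lam ++ B.lam).length).countP _ = _
  rw [List.length_append, List.range_add, List.countP_append, List.countP_map]
  refine (congrArg₂ _ (List.countP_congr fun i hi => ?_) hright).trans (add_zero _)
  rw [show (A.comp B s).lam = A.lam ++ B.lam from rfl,
    List.take_append_of_le_length (List.mem_range.1 hi).le]

theorem v_comp_right (A B : BD) (s) (hk : 1 ≤ k) :
    (A.comp B s).v (k + A.omega) = B.v k + A.nv := by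
  have hleft : (List.range A.lam.length).countP
      (fun i => decide (((A.lam ++ B.lam).take i).sum < k + A.omega)) = A.nv := by
    rw [List.countP_eq_length.2, List.length_range, nv]
    intro i hi
    rw [List.take_append_of_le_length (List.mem_range.1 hi).le, decide_eq_true_eq]
    have := (List.take_sublist i A.lam).sum_le_sum (by simp)
    change _ < k + A.lam.sum
    lia
  change (List.range (A.lam ++ B.lam).length).countP _ = _
  rw [List.length_append, List.range_add, List.countP_append, List.countP_map]
  refine (congrArg₂ _ hleft (List.countP_congr fun i _ => ?_)).trans (add_comm _ _)
  simp only [comp, Function.comp_apply, List.take_length_add_append, List.sum_append,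
    decide_eq_true_eq]
  change A.omega + _ < _ ↔ _
  lia

end Owner

/-- `K`, seen as a set of vertices of a composition `A.comp B s` with `A.nv = n`, consists of the
vertices `I` of `A` and the vertices `J` of `B`. -/
structure IsJoin (n : ℕ) (K I J : Finset ℕ) : Prop where
  mem_left : ∀ i ∈ Icc 1 n, (i ∈ K ↔ i ∈ I)
  mem_right : ∀ i, 1 ≤ i → (i + n ∈ K ↔ i ∈ J)

theorem mem_HI : k ∈ G.HI I ↔ k ∈ Icc 1 G.omega ∧ G.v k ∈ I := mem_filter

theorem v_comp_left_mem_iff (B s) (hK : IsJoin A.nv K I J) (hk : k ∈ Icc 1 A.omega) :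
    (A.comp B s).v k ∈ K ↔ A.v k ∈ I := by
  rw [v_comp_left A B s (mem_Icc.1 hk).2]
  exact hK.mem_left _ (mem_Icc.2 ⟨one_le_v hk, v_le_nv A k⟩)

theorem v_comp_right_mem_iff (s) (hK : IsJoin A.nv K I J) (hk : k ∈ Icc 1 B.omega) :
    (A.comp B s).v (k + A.omega) ∈ K ↔ B.v k ∈ J := by
  rw [v_comp_right A B s (mem_Icc.1 hk).1]
  exact hK.mem_right _ (one_le_v hk)

theorem HI_comp (B s) (hK : IsJoin A.nv K I J) :
    (A.comp B s).HI K = A.HI I ∪ (B.HI J).image (· + A.omega) := by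
  ext k
  simp only [mem_union, mem_image, mem_HI, omega_comp]
  rcases le_or_gt k A.omega with hk | hk
  · have := v_comp_left_mem_iff B s hK (k := k)
    grind
  · obtain ⟨l, rfl⟩ := Nat.exists_eq_add_of_le' hk.le
    have := v_comp_right_mem_iff (B := B) s hK (k := l)
    grind

theorem phi_comp_left (B s) (hK : IsJoin A.nv K I J) (hk : k ≤ A.omega) :
    (A.comp B s).phi K k = A.phi I k := by
  unfold phi
  rw [HI_comp B s hK]
  congr 1
  ext
  have := @mem_HI B J
  grind

theorem disjoint_image_add {X Y : Finset ℕ} {n m : ℕ} (hX : X ⊆ Icc 1 n) (hY : Y ⊆ Icc 1 m) :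
    Disjoint X (Y.image (· + n)) := by
  simp only [disjoint_left, mem_image, not_exists, not_and]
  rintro _ hx y hy rfl
  have := mem_Icc.1 (hX hx)
  have := mem_Icc.1 (hY hy)
  lia

theorem HI_subset (G : BD) (I : Finset ℕ) : G.HI I ⊆ Icc 1 G.omega := filter_subset _ _

theorem card_HI_comp (B s) (hK : IsJoin A.nv K I J) :
    #((A.comp B s).HI K) = #(A.HI I) + #(B.HI J) := by
  rw [HI_comp B s hK, card_union_of_disjoint (disjoint_image_add (A.HI_subset I) (B.HI_subset J)),
    card_image_of_injective _ (add_left_injective _)]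

theorem phi_comp_right (B s) (hK : IsJoin A.nv K I J) :
    (A.comp B s).phi K (k + A.omega) = B.phi J k + #(A.HI I) := by
  have hleft : {a ∈ A.HI I | a ≤ k + A.omega} = A.HI I :=
    filter_true_of_mem fun a ha => (mem_Icc.1 (HI_subset _ _ ha)).2.trans (Nat.le_add_left _ _)
  have hright : {b ∈ B.HI J | b ≤ k} ⊆ Icc 1 B.omega := (filter_subset _ _).trans (HI_subset _ _)
  simp only [phi, HI_comp B s hK, filter_union, hleft, filter_image, Nat.add_le_add_iff_right]
  rw [card_union_of_disjoint (disjoint_image_add (A.HI_subset I) hright),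
    card_image_of_injective _ (add_left_injective _), add_comm]

theorem lam_sub_comp (B s) (hK : IsJoin A.nv K I J) :
    ((A.comp B s).sub K).lam = (A.sub I).lam ++ (B.sub J).lam := by
  have hleft : (List.range A.lam.length).filter (fun i => i + 1 ∈ K) =
      (List.range A.lam.length).filter (fun i => i + 1 ∈ I) := by
    refine List.filter_congr fun i hi => ?_
    exact decide_eq_decide.2 (hK.mem_left (i + 1) (mem_Icc.2 ⟨by lia, List.mem_range.1 hi⟩))
  have hright : (List.range B.lam.length).filter
      ((fun i => decide (i + 1 ∈ K)) ∘ (A.lam.length + ·)) =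
      (List.range B.lam.length).filter (fun i => i + 1 ∈ J) := by
    refine List.filter_congr fun i _ => ?_
    rw [Function.comp_apply, decide_eq_decide, add_assoc, add_comm]
    exact hK.mem_right (i + 1) (by lia)
  simp only [sub, comp]
  rw [List.length_append, List.range_add, List.filter_append, List.map_append, List.filter_map,
    List.map_map, hleft, hright]
  congr 1
  · refine List.map_congr_left fun i hi => ?_
    exact List.getD_append _ _ _ _ (List.mem_range.1 (List.mem_of_mem_filter hi))
  · refine List.map_congr_left fun i _ => ?_
    rw [Function.comp_apply, List.getD_append_right _ _ _ _ (Nat.le_add_right _ _),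
      Nat.add_sub_cancel_left]

section Sub

theorem isJoin_preimage (n : ℕ) (K : Finset ℕ) :
    IsJoin n K K (K.preimage (· + n) (add_left_injective n).injOn) :=
  ⟨fun _ _ => Iff.rfl, fun _ _ => by rw [mem_preimage]⟩

/-- The B-diagram with list of vertices `l` and `E↑ = E↓ = ∅`. Since `v`, `HI`, `phi` and the
vertices of `sub` only depend on `lam`, they may be studied on it by induction on `l`. -/
def ofLam (l : List ℕ) : BD := ⟨l, ∅, ∅, ∅⟩

theorem ofLam_append (l m : List ℕ) : ofLam (l ++ m) = (ofLam l).comp (ofLam m) ∅ := by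
  simp [ofLam, comp]

theorem v_congr (h : A.lam = B.lam) : A.v = B.v := by
  unfold v
  rw [h]

theorem lam_sub_ofLam_singleton (x : ℕ) (I : Finset ℕ) :
    ((ofLam [x]).sub I).lam = if 1 ∈ I then [x] else [] := by
  split_ifs with h <;> simp [sub, ofLam, List.range_succ, h]

theorem HI_ofLam_singleton (x : ℕ) (I : Finset ℕ) :
    (ofLam [x]).HI I = if 1 ∈ I then Icc 1 x else ∅ := by
  have hv : ∀ k ∈ Icc 1 x, (ofLam [x]).v k = 1 := fun k hk =>
    le_antisymm (v_le_nv _ _) (one_le_v hk)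
  rw [HI, show (ofLam [x]).omega = x from rfl]
  rw [filter_congr (fun k hk => by rw [hv k hk]), filter_const]

theorem omega_sub (G : BD) (I : Finset ℕ) : (G.sub I).omega = #(G.HI I) := by
  suffices ∀ l, ((ofLam l).sub I).omega = #((ofLam l).HI I) from this G.lam
  intro l
  induction l using List.reverseRecOn with
  | nil => rfl
  | append_singleton l x ih =>
    have hI := isJoin_preimage (ofLam l).nv I
    rw [ofLam_append, omega, lam_sub_comp _ _ hI, List.sum_append, card_HI_comp _ _ hI]
    refine congrArg₂ _ ih ?_
    rw [lam_sub_ofLam_singleton, HI_ofLam_singleton]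
    split_ifs <;> simp

theorem phi_le (G : BD) (I : Finset ℕ) (k : ℕ) : G.phi I k ≤ (G.sub I).omega :=
  (card_le_card (filter_subset _ _)).trans_eq (omega_sub G I).symm

theorem one_le_phi (hk : k ∈ G.HI I) : 1 ≤ G.phi I k :=
  card_pos.2 ⟨k, mem_filter.2 ⟨hk, le_rfl⟩⟩

theorem phi_mem_Icc (hk : k ∈ G.HI I) : G.phi I k ∈ Icc 1 (G.sub I).omega :=
  mem_Icc.2 ⟨one_le_phi hk, phi_le G I k⟩

theorem phi_strictMonoOn (G : BD) (I : Finset ℕ) : StrictMonoOn (G.phi I) (G.HI I) := by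
  intro a _ b hb hab
  refine card_lt_card ((ssubset_iff_of_subset ?_).2 ⟨b, ?_, ?_⟩)
  · exact monotone_filter_right _ fun c _ hc => hc.trans hab.le
  · exact mem_filter.2 ⟨hb, le_rfl⟩
  · exact fun h => hab.not_ge (mem_filter.1 h).2

theorem v_sub_comp_left (B s) (hK : IsJoin A.nv K I J) (hk : k ∈ A.HI I) :
    ((A.comp B s).sub K).v ((A.comp B s).phi K k) = (A.sub I).v (A.phi I k) := by
  rw [v_congr (B := (A.sub I).comp (B.sub J) ∅) (lam_sub_comp B s hK),
    phi_comp_left B s hK (mem_Icc.1 (HI_subset _ _ hk)).2, v_comp_left _ _ _ (phi_le A I k)]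

theorem v_sub_comp_right (s) (hK : IsJoin A.nv K I J) (hk : k ∈ B.HI J) :
    ((A.comp B s).sub K).v ((A.comp B s).phi K (k + A.omega)) =
      (B.sub J).v (B.phi J k) + (A.sub I).nv := by
  rw [v_congr (B := (A.sub I).comp (B.sub J) ∅) (lam_sub_comp B s hK), phi_comp_right B s hK,
    ← omega_sub, v_comp_right _ _ _ (one_le_phi hk)]

theorem v_sub_lt (G : BD) (I : Finset ℕ) : ∀ a ∈ G.HI I, ∀ b ∈ G.HI I, G.v a < G.v b →
    (G.sub I).v (G.phi I a) < (G.sub I).v (G.phi I b) := by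
  suffices ∀ l, ∀ a ∈ (ofLam l).HI I, ∀ b ∈ (ofLam l).HI I, (ofLam l).v a < (ofLam l).v b →
    ((ofLam l).sub I).v ((ofLam l).phi I a) < ((ofLam l).sub I).v ((ofLam l).phi I b) from
      this G.lam
  intro l
  induction l using List.reverseRecOn with
  | nil => simp [HI, ofLam, omega]
  | append_singleton l x ih =>
    have hI := isJoin_preimage (ofLam l).nv I
    rw [ofLam_append, HI_comp _ _ hI]
    intro a ha b hb hab
    simp only [mem_union, mem_image] at ha hb
    rcases ha with ha | ⟨a, ha, rfl⟩ <;> rcases hb with hb | ⟨b, hb, rfl⟩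
    · rw [v_comp_left _ _ _ (mem_Icc.1 (HI_subset _ _ ha)).2,
        v_comp_left _ _ _ (mem_Icc.1 (HI_subset _ _ hb)).2] at hab
      rw [v_sub_comp_left _ _ hI ha, v_sub_comp_left _ _ hI hb]
      exact ih a ha b hb hab
    · rw [v_sub_comp_left _ _ hI ha, v_sub_comp_right _ hI hb]
      have := v_le_nv ((ofLam l).sub I) ((ofLam l).phi I a)
      have := one_le_v (phi_mem_Icc hb)
      lia
    · rw [v_comp_right _ _ _ (mem_Icc.1 (HI_subset _ _ ha)).1,
        v_comp_left _ _ _ (mem_Icc.1 (HI_subset _ _ hb)).2] at hab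
      have := v_le_nv (ofLam l) b
      lia
    · rw [v_comp_right _ _ _ (mem_Icc.1 (HI_subset _ _ ha)).1,
        v_comp_right _ _ _ (mem_Icc.1 (HI_subset _ _ hb)).1] at hab
      have := one_le_v (HI_subset _ _ ha)
      have : (ofLam [x]).v b ≤ 1 := v_le_nv (ofLam [x]) b
      lia

end Sub
section Valid

theorem valid_iff : G.Valid ↔ (∀ x ∈ G.lam, 0 < x) ∧ G.up ⊆ Icc 1 G.omega ∧
    G.dn ⊆ Icc 1 G.omega ∧ IsPartialMatching G.up G.dn G.ed ∧
      ∀ p ∈ G.ed, G.v p.1 < G.v p.2 := by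
  constructor
  · rintro ⟨hlam, hup, hdn, hed, hfst, hsnd⟩
    exact ⟨hlam, hup, hdn, ⟨fun p hp => mem_product.2 ⟨(hed p hp).1, (hed p hp).2.1⟩, hfst, hsnd⟩,
      fun p hp => (hed p hp).2.2⟩
  · rintro ⟨hlam, hup, hdn, hed, hlt⟩
    exact ⟨hlam, hup, hdn, fun p hp => ⟨hed.fst_mem hp, hed.snd_mem hp, hlt p hp⟩,
      hed.injOn_fst, hed.injOn_snd⟩

theorem matching_iff : Matching A B s ↔ IsPartialMatching A.HfUp B.HfDn s :=
  ⟨fun ⟨h, hfst, hsnd⟩ => ⟨fun p hp => mem_product.2 (h p hp), hfst, hsnd⟩,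
    fun h => ⟨fun _ hp => ⟨h.fst_mem hp, h.snd_mem hp⟩, h.injOn_fst, h.injOn_snd⟩⟩

theorem matchings_eq (A B : BD) : matchings A B = partialMatchings A.HfUp B.HfDn := by
  classical
  ext s
  rw [mem_partialMatchings, ← matching_iff, matchings, mem_filter, mem_powerset]
  exact and_iff_right_of_imp fun h => (matching_iff.1 h).subset

theorem HfUp_subset (G : BD) : G.HfUp ⊆ G.up := sdiff_subset

theorem HfDn_subset (G : BD) : G.HfDn ⊆ G.dn := sdiff_subset

namespace Valid

theorem up_subset (hG : G.Valid) : G.up ⊆ Icc 1 G.omega := hG.2.1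

theorem dn_subset (hG : G.Valid) : G.dn ⊆ Icc 1 G.omega := hG.2.2.1

theorem isPartialMatching (hG : G.Valid) : IsPartialMatching G.up G.dn G.ed :=
  (valid_iff.1 hG).2.2.2.1

theorem v_lt (hG : G.Valid) {p : ℕ × ℕ} (hp : p ∈ G.ed) : G.v p.1 < G.v p.2 :=
  (valid_iff.1 hG).2.2.2.2 p hp

theorem fst_mem_Icc (hG : G.Valid) {p : ℕ × ℕ} (hp : p ∈ G.ed) : p.1 ∈ Icc 1 G.omega :=
  hG.up_subset (hG.isPartialMatching.fst_mem hp)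

theorem snd_mem_Icc (hG : G.Valid) {p : ℕ × ℕ} (hp : p ∈ G.ed) : p.2 ∈ Icc 1 G.omega :=
  hG.dn_subset (hG.isPartialMatching.snd_mem hp)

theorem HfUp_subset_Icc (hG : G.Valid) : G.HfUp ⊆ Icc 1 G.omega :=
  G.HfUp_subset.trans hG.up_subset

theorem HfDn_subset_Icc (hG : G.Valid) : G.HfDn ⊆ Icc 1 G.omega :=
  G.HfDn_subset.trans hG.dn_subset

end Valid

theorem union_image_add_subset_Icc {X Y : Finset ℕ} {n m : ℕ} (hX : X ⊆ Icc 1 n)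
    (hY : Y ⊆ Icc 1 m) : X ∪ Y.image (· + n) ⊆ Icc 1 (n + m) := by
  refine union_subset (hX.trans (Icc_subset_Icc_right (Nat.le_add_right n m))) ?_
  refine image_subset_iff.2 fun y hy => ?_
  have := mem_Icc.1 (hY hy)
  rw [mem_Icc]
  lia

theorem isPartialMatching_ed_comp (hA : A.Valid) (hB : B.Valid)
    (hs : IsPartialMatching A.HfUp B.HfDn s) :
    IsPartialMatching (A.comp B s).up (A.comp B s).dn (A.comp B s).ed := by
  have hinj (X : Set ℕ) : X.InjOn (· + A.omega) := (add_left_injective _).injOn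
  have hedA := hA.isPartialMatching.image_fst_image_snd.mono Subset.rfl
    (image_subset_iff.2 fun _ => hA.isPartialMatching.snd_mem)
  have hs' := (isPartialMatching_image_iff (Set.injOn_id _) (hinj _) hs.subset).2 hs
  rw [image_id] at hs'
  have hedB : IsPartialMatching B.up (B.ed.image Prod.snd) B.ed :=
    hB.isPartialMatching.image_fst_image_snd.mono
      (image_subset_iff.2 fun _ => hB.isPartialMatching.fst_mem) Subset.rfl
  have hedB' := (isPartialMatching_image_iff (hinj _) (hinj _) hedB.subset).2 hedB
  have hdnB : B.ed.image Prod.snd ⊆ B.dn :=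
    image_subset_iff.2 fun _ => hB.isPartialMatching.snd_mem
  have hupA : A.ed.image Prod.fst ⊆ A.up :=
    image_subset_iff.2 fun _ => hA.isPartialMatching.fst_mem
  refine ((hedA.union hs' ?_ ?_).union hedB' ?_ ?_).mono ?_ ?_
  · exact disjoint_sdiff
  · exact disjoint_image_add hA.dn_subset hB.HfDn_subset_Icc
  · exact disjoint_image_add ((union_subset hupA A.HfUp_subset).trans hA.up_subset) hB.up_subset
  · refine disjoint_union_left.2 ⟨disjoint_image_add hA.dn_subset (hdnB.trans hB.dn_subset), ?_⟩
    exact (disjoint_image (add_left_injective _)).2 sdiff_disjoint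
  · exact union_subset_union_left (union_subset hupA A.HfUp_subset)
  · rw [union_assoc, ← image_union]
    exact union_subset_union_right (image_subset_image (union_subset B.HfDn_subset hdnB))

theorem v_comp_lt (hA : A.Valid) (hB : B.Valid) (hs : IsPartialMatching A.HfUp B.HfDn s) :
    ∀ p ∈ (A.comp B s).ed, (A.comp B s).v p.1 < (A.comp B s).v p.2 := by
  simp only [comp, mem_union, mem_image]
  rintro _ ((hp | ⟨p, hp, rfl⟩) | ⟨p, hp, rfl⟩) <;> change (A.comp B s).v _ < (A.comp B s).v _
  · rw [v_comp_left _ _ _ (mem_Icc.1 (hA.fst_mem_Icc hp)).2,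
      v_comp_left _ _ _ (mem_Icc.1 (hA.snd_mem_Icc hp)).2]
    exact hA.v_lt hp
  · have ha := hA.HfUp_subset_Icc (hs.fst_mem hp)
    have hb := hB.HfDn_subset_Icc (hs.snd_mem hp)
    rw [v_comp_left _ _ _ (mem_Icc.1 ha).2, v_comp_right _ _ _ (mem_Icc.1 hb).1]
    have := v_le_nv A p.1
    have := one_le_v hb
    lia
  · rw [v_comp_right _ _ _ (mem_Icc.1 (hB.fst_mem_Icc hp)).1,
      v_comp_right _ _ _ (mem_Icc.1 (hB.snd_mem_Icc hp)).1]
    exact Nat.add_lt_add_right (hB.v_lt hp) _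

theorem Valid.comp (hA : A.Valid) (hB : B.Valid) (hs : IsPartialMatching A.HfUp B.HfDn s) :
    (A.comp B s).Valid := by
  refine valid_iff.2 ⟨?_, ?_, ?_, isPartialMatching_ed_comp hA hB hs, v_comp_lt hA hB hs⟩
  · exact List.forall_mem_append.2 ⟨hA.1, hB.1⟩
  · rw [omega_comp]
    exact union_image_add_subset_Icc hA.up_subset hB.up_subset
  · rw [omega_comp]
    exact union_image_add_subset_Icc hA.dn_subset hB.dn_subset

theorem inter_HI {X : Finset ℕ} (hX : X ⊆ Icc 1 G.omega) :
    X ∩ G.HI I = {k ∈ X | G.v k ∈ I} := by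
  rw [HI, inter_filter, inter_eq_left.2 hX]

theorem Valid.sub (hG : G.Valid) (I : Finset ℕ) : (G.sub I).Valid := by
  have hfilter := hG.isPartialMatching.filter (G.v · ∈ I) (G.v · ∈ I)
  rw [← inter_HI hG.up_subset, ← inter_HI hG.dn_subset] at hfilter
  have hinj (X : Finset ℕ) : Set.InjOn (G.phi I) (X ∩ G.HI I : Finset ℕ) :=
    (phi_strictMonoOn G I).injOn.mono (coe_subset.2 inter_subset_right)
  have hIcc (X : Finset ℕ) : (X ∩ G.HI I).image (G.phi I) ⊆ Icc 1 (G.sub I).omega :=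
    image_subset_iff.2 fun k hk => phi_mem_Icc (mem_of_mem_inter_right hk)
  refine valid_iff.2 ⟨?_, hIcc _, hIcc _,
    (isPartialMatching_image_iff (hinj _) (hinj _) hfilter.subset).2 hfilter, ?_⟩
  · simp only [BD.sub, List.mem_map, List.mem_filter, List.mem_range]
    rintro _ ⟨i, ⟨hi, -⟩, rfl⟩
    rw [List.getD_eq_getElem _ _ hi]
    exact hG.1 _ (List.getElem_mem hi)
  · simp only [BD.sub, mem_image, mem_filter]
    rintro _ ⟨p, ⟨hp, h⟩, rfl⟩
    exact v_sub_lt G I _ (mem_HI.2 ⟨hG.fst_mem_Icc hp, h.1⟩) _ (mem_HI.2 ⟨hG.snd_mem_Icc hp, h.2⟩)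
      (hG.v_lt hp)

end Valid

section Restrict

/-- The pairs of `s` joining a half-edge of the vertices `I` of `A` to a half-edge of the vertices
`J` of `B`, relabelled as pairs of half-edges of `A.sub I` and `B.sub J`. This is used both for the
edges of a single diagram (`A = B` and `I = J`) and for matchings between two diagrams. -/
def restrict (A B : BD) (I J : Finset ℕ) (s : Finset (ℕ × ℕ)) : Finset (ℕ × ℕ) :=
  {p ∈ s | A.v p.1 ∈ I ∧ B.v p.2 ∈ J}.image (Prod.map (A.phi I) (B.phi J))

/-- No pair of `s` joins the vertices `I` of `A` to vertices of `B` outside of `J`, or vertices of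
`A` outside of `I` to the vertices `J` of `B`. For `A = B`, `I = J` and the edges `s` of `A`, this
says that `I` is isolated. -/
def Compatible (A B : BD) (I J : Finset ℕ) (s : Finset (ℕ × ℕ)) : Prop :=
  ∀ p ∈ s, A.v p.1 ∈ I ↔ B.v p.2 ∈ J

instance : Decidable (Compatible A B I J s) :=
  inferInstanceAs (Decidable (∀ p ∈ s, A.v p.1 ∈ I ↔ B.v p.2 ∈ J))

theorem ed_sub (G : BD) (I : Finset ℕ) : (G.sub I).ed = restrict G G I I G.ed := rfl

theorem isolated_iff_compatible : G.Isolated I ↔ Compatible G G I I G.ed := Iff.rfl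

theorem restrict_union (A B : BD) (I J : Finset ℕ) (s t : Finset (ℕ × ℕ)) :
    restrict A B I J (s ∪ t) = restrict A B I J s ∪ restrict A B I J t := by
  rw [restrict, filter_union, image_union, restrict, restrict]

theorem compatible_union {t : Finset (ℕ × ℕ)} :
    Compatible A B I J (s ∪ t) ↔ Compatible A B I J s ∧ Compatible A B I J t :=
  forall_mem_union

variable {C : BD} {f f' g g' : ℕ → ℕ}

theorem restrict_image (hf : ∀ p ∈ s, (C.v (f p.1) ∈ K ↔ A.v p.1 ∈ I))
    (hg : ∀ p ∈ s, (C.v (g p.2) ∈ K ↔ B.v p.2 ∈ J))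
    (hf' : ∀ p ∈ s, C.phi K (f p.1) = f' (A.phi I p.1))
    (hg' : ∀ p ∈ s, C.phi K (g p.2) = g' (B.phi J p.2)) :
    restrict C C K K (s.image (Prod.map f g)) =
      (restrict A B I J s).image (Prod.map f' g') := by
  simp only [restrict, filter_image, image_image, Prod.map_fst, Prod.map_snd]
  rw [filter_congr fun p hp => and_congr (hf p hp) (hg p hp)]
  exact image_congr fun p hp =>
    Prod.ext (hf' p (mem_of_mem_filter p hp)) (hg' p (mem_of_mem_filter p hp))

theorem compatible_image (hf : ∀ p ∈ s, (C.v (f p.1) ∈ K ↔ A.v p.1 ∈ I))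
    (hg : ∀ p ∈ s, (C.v (g p.2) ∈ K ↔ B.v p.2 ∈ J)) :
    Compatible C C K K (s.image (Prod.map f g)) ↔ Compatible A B I J s := by
  rw [Compatible, forall_mem_image]
  exact forall₂_congr fun p hp => iff_congr (hf p hp) (hg p hp)

theorem image_phi_comp (s) (hK : IsJoin A.nv K I J) {X Y : Finset ℕ} (hX : X ⊆ Icc 1 A.omega)
    (hY : Y ⊆ Icc 1 B.omega) :
    ((X ∪ Y.image (· + A.omega)) ∩ (A.comp B s).HI K).image ((A.comp B s).phi K) =
      (X ∩ A.HI I).image (A.phi I) ∪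
        ((Y ∩ B.HI J).image (B.phi J)).image (· + (A.sub I).omega) := by
  rw [inter_HI (by rw [omega_comp]; exact union_image_add_subset_Icc hX hY), inter_HI hX,
    inter_HI hY, filter_union, image_union, filter_image, image_image, image_image,
    filter_congr fun k hk => v_comp_left_mem_iff B s hK (hX hk),
    filter_congr fun k hk => v_comp_right_mem_iff s hK (hY hk)]
  congr 1
  · exact image_congr fun k hk =>
      phi_comp_left B s hK (mem_Icc.1 (hX (mem_of_mem_filter k hk))).2
  · exact image_congr fun k _ => by
      simp only [Function.comp_apply, phi_comp_right B s hK, omega_sub]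

section Comp

variable (hA : A.Valid) (hB : B.Valid) (hs : IsPartialMatching A.HfUp B.HfDn s)
  (hK : IsJoin A.nv K I J)
include hA hB hs hK

theorem restrict_ed_comp : restrict (A.comp B s) (A.comp B s) K K (A.comp B s).ed =
    ((A.sub I).comp (B.sub J) (restrict A B I J s)).ed := by
  have hl {k} (hk : k ∈ Icc 1 A.omega) := v_comp_left_mem_iff B s hK hk
  have hr {k} (hk : k ∈ Icc 1 B.omega) := v_comp_right_mem_iff s hK hk
  have hl' {k} (hk : k ∈ Icc 1 A.omega) := phi_comp_left B s hK (mem_Icc.1 hk).2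
  have hr' (k) : (A.comp B s).phi K (k + A.omega) = B.phi J k + (A.sub I).omega := by
    rw [phi_comp_right B s hK, omega_sub]
  have hedA := restrict_image (f := id) (g := id) (f' := id) (g' := id)
    (fun p hp => hl (hA.fst_mem_Icc hp)) (fun p hp => hl (hA.snd_mem_Icc hp))
    (fun p hp => hl' (hA.fst_mem_Icc hp)) (fun p hp => hl' (hA.snd_mem_Icc hp))
  have hs' := restrict_image (f := id) (f' := id) (g := (· + A.omega)) (g' := (· + (A.sub I).omega))
    (fun p hp => hl (hA.HfUp_subset_Icc (hs.fst_mem hp)))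
    (fun p hp => hr (hB.HfDn_subset_Icc (hs.snd_mem hp)))
    (fun p hp => hl' (hA.HfUp_subset_Icc (hs.fst_mem hp))) (fun p _ => hr' p.2)
  have hedB := restrict_image (f := (· + A.omega)) (g := (· + A.omega))
    (f' := (· + (A.sub I).omega)) (g' := (· + (A.sub I).omega)) (fun p hp => hr (hB.fst_mem_Icc hp))
    (fun p hp => hr (hB.snd_mem_Icc hp)) (fun p _ => hr' p.1) (fun p _ => hr' p.2)
  rw [Prod.map_id, image_id, image_id] at hedA
  exact (restrict_union ..).trans
    (congrArg₂ _ ((restrict_union ..).trans (congrArg₂ _ hedA hs')) hedB)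

theorem sub_comp :
    (A.comp B s).sub K = (A.sub I).comp (B.sub J) (restrict A B I J s) :=
  BD.ext (lam_sub_comp B s hK) (image_phi_comp s hK hA.up_subset hB.up_subset)
    (image_phi_comp s hK hA.dn_subset hB.dn_subset) (restrict_ed_comp hA hB hs hK)

theorem isolated_comp :
    (A.comp B s).Isolated K ↔ A.Isolated I ∧ B.Isolated J ∧ Compatible A B I J s := by
  have hl {k} (hk : k ∈ Icc 1 A.omega) := v_comp_left_mem_iff B s hK hk
  have hr {k} (hk : k ∈ Icc 1 B.omega) := v_comp_right_mem_iff s hK hk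
  have hedA := compatible_image (f := id) (g := id)
    (fun p hp => hl (hA.fst_mem_Icc hp)) (fun p hp => hl (hA.snd_mem_Icc hp))
  have hs' := compatible_image (f := id) (g := (· + A.omega))
    (fun p hp => hl (hA.HfUp_subset_Icc (hs.fst_mem hp)))
    (fun p hp => hr (hB.HfDn_subset_Icc (hs.snd_mem hp)))
  have hedB := compatible_image (f := (· + A.omega)) (g := (· + A.omega))
    (fun p hp => hr (hB.fst_mem_Icc hp)) (fun p hp => hr (hB.snd_mem_Icc hp))
  rw [Prod.map_id, image_id] at hedA
  rw [isolated_iff_compatible, isolated_iff_compatible, isolated_iff_compatible, ← hedA, ← hs',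
    ← hedB, and_comm (a := Compatible _ _ _ _ (image _ B.ed)), ← and_assoc, ← compatible_union,
    ← compatible_union]
  rfl

end Comp

theorem image_phi_sdiff {X Y : Finset ℕ} (hX : X ⊆ Icc 1 G.omega) (hY : Y ⊆ X) :
    (X ∩ G.HI I).image (G.phi I) \ {k ∈ Y | G.v k ∈ I}.image (G.phi I) =
      {k ∈ X \ Y | G.v k ∈ I}.image (G.phi I) := by
  have hinj : Set.InjOn (G.phi I) (X ∩ G.HI I : Finset ℕ) :=
    (phi_strictMonoOn G I).injOn.mono (coe_subset.2 inter_subset_right)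
  rw [← inter_HI (hY.trans hX), ← inter_HI (sdiff_subset.trans hX),
    ← image_sdiff_of_injOn hinj (inter_subset_inter_right hY)]
  exact congrArg _ (inf_sdiff_distrib_right ..).symm

theorem HfUp_sub (hG : G.Valid) (hI : G.Isolated I) :
    (G.sub I).HfUp = {k ∈ G.HfUp | G.v k ∈ I}.image (G.phi I) := by
  have hedge : {p ∈ G.ed | G.v p.1 ∈ I ∧ G.v p.2 ∈ I} = {p ∈ G.ed | G.v p.1 ∈ I} :=
    filter_congr fun p hp => and_iff_left_of_imp (hI p hp).1
  rw [HfUp, HfUp, ← image_phi_sdiff hG.up_subset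
    (image_subset_iff.2 fun _ => hG.isPartialMatching.fst_mem),
    ed_sub, restrict, hedge, filter_image, image_image, image_image]
  rfl

theorem HfDn_sub (hG : G.Valid) (hI : G.Isolated I) :
    (G.sub I).HfDn = {k ∈ G.HfDn | G.v k ∈ I}.image (G.phi I) := by
  have hedge : {p ∈ G.ed | G.v p.1 ∈ I ∧ G.v p.2 ∈ I} = {p ∈ G.ed | G.v p.2 ∈ I} :=
    filter_congr fun p hp => and_iff_right_of_imp (hI p hp).2
  rw [HfDn, HfDn, ← image_phi_sdiff hG.dn_subset
    (image_subset_iff.2 fun _ => hG.isPartialMatching.snd_mem),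
    ed_sub, restrict, hedge, filter_image, image_image, image_image]
  rfl

end Restrict

section Complement

theorem v_mem_compl_iff (hk : k ∈ Icc 1 G.omega) : G.v k ∈ Icc 1 G.nv \ I ↔ G.v k ∉ I := by
  rw [mem_sdiff, and_iff_right (mem_Icc.2 ⟨one_le_v hk, v_le_nv G k⟩)]

theorem Isolated.compl (hG : G.Valid) (hI : G.Isolated I) : G.Isolated (Icc 1 G.nv \ I) :=
  fun p hp => by
    rw [v_mem_compl_iff (hG.fst_mem_Icc hp), v_mem_compl_iff (hG.snd_mem_Icc hp), hI p hp]

end Complement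

section SumMatchings

theorem matchings_sub (hA : A.Valid) (hB : B.Valid) (hI : A.Isolated I) (hJ : B.Isolated J) :
    matchings (A.sub I) (B.sub J) = partialMatchings ({a ∈ A.HfUp | A.v a ∈ I}.image (A.phi I))
      ({b ∈ B.HfDn | B.v b ∈ J}.image (B.phi J)) := by
  rw [matchings_eq, HfUp_sub hA hI, HfDn_sub hB hJ]

theorem phi_injOn {X : Finset ℕ} (hX : X ⊆ Icc 1 G.omega) (I : Finset ℕ) :
    Set.InjOn (G.phi I) {k ∈ X | G.v k ∈ I} :=
  (phi_strictMonoOn G I).injOn.mono fun _ hk => mem_HI.2 ⟨hX hk.1, hk.2⟩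

theorem sum_compatible_matchings {M : Type*} [AddCommMonoid M] (hA : A.Valid) (hB : B.Valid)
    (hI : A.Isolated I) (hJ : B.Isolated J) (F : Finset (ℕ × ℕ) → Finset (ℕ × ℕ) → M) :
    ∑ s ∈ matchings A B with Compatible A B I J s,
        F (restrict A B I J s) (restrict A B (Icc 1 A.nv \ I) (Icc 1 B.nv \ J) s) =
      ∑ t ∈ matchings (A.sub I) (B.sub J),
        ∑ t' ∈ matchings (A.sub (Icc 1 A.nv \ I)) (B.sub (Icc 1 B.nv \ J)), F t t' := by
  rw [matchings_sub hA hB hI hJ, matchings_sub hA hB (hI.compl hA) (hJ.compl hB), matchings_eq]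
  have hA' := hA.HfUp_subset_Icc
  have hB' := hB.HfDn_subset_Icc
  have hinjA (I) : Set.InjOn (A.phi I) ({a ∈ A.HfUp | A.v a ∈ I} : Finset ℕ) := by
    rw [coe_filter]
    exact phi_injOn hA' I
  have hinjB (J) : Set.InjOn (B.phi J) ({b ∈ B.HfDn | B.v b ∈ J} : Finset ℕ) := by
    rw [coe_filter]
    exact phi_injOn hB' J
  rw [sum_partialMatchings_image (hinjA _) (hinjB _)]
  simp only [sum_partialMatchings_image (hinjA _) (hinjB _)]
  rw [← sum_partialMatchings_cut (fun a ha => v_mem_compl_iff (hA' ha))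
    (fun b hb => v_mem_compl_iff (hB' hb))
    (fun t t' => F (t.image (Prod.map (A.phi I) (B.phi J)))
      (t'.image (Prod.map (A.phi (Icc 1 A.nv \ I)) (B.phi (Icc 1 B.nv \ J)))))]
  rfl

end SumMatchings

section Join

variable {n m : ℕ}

/-- The vertices `I` of `A` and `J` of `B`, seen as a set of vertices of `A.comp B s` where
`A.nv = n`. -/
def join (n : ℕ) (I J : Finset ℕ) : Finset ℕ := I ∪ J.image (· + n)

theorem isJoin_join (hI : I ⊆ Icc 1 n) (hJ : J ⊆ Icc 1 m) : IsJoin n (join n I J) I J where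
  mem_left i hi := by
    have := @hJ
    simp only [join]
    grind
  mem_right i hi := by
    have := @hI (i + n)
    simp only [join]
    grind

theorem IsJoin.compl (hK : IsJoin n K I J) (m : ℕ) :
    IsJoin n (Icc 1 (n + m) \ K) (Icc 1 n \ I) (Icc 1 m \ J) where
  mem_left i hi := by
    have := hK.mem_left i hi
    grind
  mem_right i hi := by
    have := hK.mem_right i hi
    grind

theorem sum_powerset_Icc_add {M : Type*} [AddCommMonoid M] (n m : ℕ) (F : Finset ℕ → M) :
    ∑ K ∈ (Icc 1 (n + m)).powerset, F K =
      ∑ I ∈ (Icc 1 n).powerset, ∑ J ∈ (Icc 1 m).powerset, F (join n I J) := by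
  rw [← sum_product']
  symm
  refine sum_nbij' (fun p => join n p.1 p.2) (fun K => (K ∩ Icc 1 n, {j ∈ Icc 1 m | j + n ∈ K}))
    ?_ ?_ ?_ ?_ fun _ _ => rfl
  · simp only [mem_product, mem_powerset]
    exact fun p hp => union_image_add_subset_Icc hp.1 hp.2
  · simp only [mem_product, mem_powerset]
    exact fun K _ => ⟨inter_subset_right, filter_subset _ _⟩
  · rintro ⟨I, J⟩ h
    simp only [mem_product, mem_powerset] at h
    have hK := isJoin_join h.1 h.2
    have := @h.1
    have := @h.2
    ext i
    · have := hK.mem_left i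
      grind
    · have := hK.mem_right i
      grind
  · intro K hK
    rw [mem_powerset] at hK
    ext k
    have := @hK k
    simp only [join, mem_union, mem_inter, mem_image, mem_filter, mem_Icc] at this ⊢
    constructor
    · grind
    · intro hk
      rcases le_or_gt k n with h | h
      · grind
      · exact Or.inr ⟨k - n, by grind⟩

open scoped Classical in
theorem sum_isolated_comp {M : Type*} [AddCommMonoid M] (hA : A.Valid) (hB : B.Valid)
    (hs : IsPartialMatching A.HfUp B.HfDn s) (F : Finset ℕ → M) :
    ∑ K ∈ (Icc 1 (A.comp B s).nv).powerset with (A.comp B s).Isolated K, F K =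
      ∑ I ∈ (Icc 1 A.nv).powerset with A.Isolated I,
        ∑ J ∈ (Icc 1 B.nv).powerset with B.Isolated J,
          if Compatible A B I J s then F (join A.nv I J) else 0 := by
  rw [nv_comp, sum_filter, sum_powerset_Icc_add, sum_filter]
  refine sum_congr rfl fun I hI => ?_
  have hterm : ∀ J ∈ (Icc 1 B.nv).powerset,
      (if (A.comp B s).Isolated (join A.nv I J) then F (join A.nv I J) else 0) =
        if A.Isolated I then if B.Isolated J then
          if Compatible A B I J s then F (join A.nv I J) else 0 else 0 else 0 := by
    intro J hJ
    have hK := isJoin_join (mem_powerset.1 hI) (mem_powerset.1 hJ)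
    rw [if_congr (isolated_comp hA hB hs hK) rfl rfl, ite_and, ite_and]
  rw [sum_congr rfl hterm, sum_filter, sum_ite_irrel, sum_const_zero]

end Join

section Counit

theorem eq_eps_iff (hG : G.Valid) : G = eps ↔ G.lam = [] := by
  refine ⟨fun h => h ▸ rfl, fun hlam => ?_⟩
  have hIcc : Icc 1 G.omega = ∅ := by rw [omega, hlam, List.sum_nil, Icc_eq_empty_of_lt one_pos]
  have hup : G.up = ∅ := subset_empty.1 (hIcc ▸ hG.up_subset)
  have hdn : G.dn = ∅ := subset_empty.1 (hIcc ▸ hG.dn_subset)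
  have hed : G.ed = ∅ := by
    have := hG.isPartialMatching.subset
    rwa [hup, empty_product, subset_empty] at this
  cases G
  simp_all only [eps]

theorem comp_eq_eps_iff (hA : A.Valid) (hB : B.Valid) (hs : IsPartialMatching A.HfUp B.HfDn s) :
    A.comp B s = eps ↔ A = eps ∧ B = eps := by
  rw [eq_eps_iff (hA.comp hB hs), eq_eps_iff hA, eq_eps_iff hB]
  exact List.append_eq_nil_iff

theorem matchings_eps_left (B : BD) : matchings eps B = {∅} := by
  ext s
  rw [matchings_eq, mem_partialMatchings, mem_singleton]
  constructor
  · exact fun hs => subset_empty.1 hs.subset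
  · rintro rfl
    exact ⟨empty_subset _, by simp, by simp⟩

end Counit

end BD

section Bialgebra

open BD Finset

theorem mkB_of_valid {G : BD} (hG : G.Valid) : mkB G = Finsupp.single ⟨G, hG⟩ 1 := dif_pos hG

theorem liftB_single {V : Type*} [AddCommMonoid V] [Module ℂ V] (f : BDiagram → V)
    (A : BDiagram) : liftB f (Finsupp.single A 1) = f A := by
  simp [liftB]

theorem liftB_mkB {V : Type*} [AddCommMonoid V] [Module ℂ V] (f : BDiagram → V) {G : BD}
    (hG : G.Valid) : liftB f (mkB G) = f ⟨G, hG⟩ := by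
  rw [mkB_of_valid hG, liftB_single]

theorem bilin_ext_single {V : Type*} [AddCommMonoid V] [Module ℂ V]
    {f g : BSpace →ₗ[ℂ] BSpace →ₗ[ℂ] V}
    (h : ∀ A B, f (Finsupp.single A 1) (Finsupp.single B 1) =
      g (Finsupp.single A 1) (Finsupp.single B 1)) : f = g :=
  Finsupp.lhom_ext' fun A => LinearMap.ext_ring <|
    Finsupp.lhom_ext' fun B => LinearMap.ext_ring (h A B)

theorem starB_single (A B : BDiagram) :
    starB (Finsupp.single A 1) (Finsupp.single B 1) = mulfun A B := by
  rw [starB, liftB_single, liftB_single]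

theorem starB_mkB {A B : BD} (hA : A.Valid) (hB : B.Valid) :
    starB (mkB A) (mkB B) = ∑ s ∈ matchings A B, mkB (A.comp B s) := by
  rw [mkB_of_valid hA, mkB_of_valid hB, starB_single, mulfun]

theorem liftB_mulfun {V : Type*} [AddCommMonoid V] [Module ℂ V] (f : BDiagram → V)
    {F : Finset (ℕ × ℕ) → V} (A B : BDiagram)
    (hF : ∀ s (hs : IsPartialMatching A.1.HfUp B.1.HfDn s),
      f ⟨A.1.comp B.1 s, A.2.comp B.2 hs⟩ = F s) :
    liftB f (mulfun A B) = ∑ s ∈ matchings A.1 B.1, F s := by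
  rw [mulfun, map_sum]
  refine sum_congr rfl fun s hs => ?_
  rw [matchings_eq, mem_partialMatchings] at hs
  rw [liftB_mkB f (A.2.comp B.2 hs), hF s hs]

/-- The componentwise product `star2` of `ℬ ⊗ ℬ` as a bilinear map. -/
noncomputable def star2Hom :
    BSpace ⊗[ℂ] BSpace →ₗ[ℂ] BSpace ⊗[ℂ] BSpace →ₗ[ℂ] BSpace ⊗[ℂ] BSpace :=
  (TensorProduct.mk ℂ (BSpace ⊗[ℂ] BSpace) (BSpace ⊗[ℂ] BSpace)).compr₂
    ((TensorProduct.map muB muB).comp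
      (TensorProduct.tensorTensorTensorComm ℂ BSpace BSpace BSpace BSpace).toLinearMap)

theorem star2Hom_apply (x y : BSpace ⊗[ℂ] BSpace) : star2Hom x y = star2 x y := rfl

theorem star2_tmul (a b c d : BSpace) :
    star2 (a ⊗ₜ[ℂ] b) (c ⊗ₜ[ℂ] d) = starB a c ⊗ₜ[ℂ] starB b d := by
  simp [star2, muB]

theorem star2_sum_sum {ι κ : Type*} (S : Finset ι) (T : Finset κ)
    (x : ι → BSpace ⊗[ℂ] BSpace) (y : κ → BSpace ⊗[ℂ] BSpace) :
    star2 (∑ i ∈ S, x i) (∑ j ∈ T, y j) = ∑ i ∈ S, ∑ j ∈ T, star2 (x i) (y j) := by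
  simp only [← star2Hom_apply, map_sum, LinearMap.sum_apply]
  exact sum_comm

theorem star2_mkB_tmul {A A' B B' : BD} (hA : A.Valid) (hA' : A'.Valid) (hB : B.Valid)
    (hB' : B'.Valid) :
    star2 (mkB A ⊗ₜ[ℂ] mkB A') (mkB B ⊗ₜ[ℂ] mkB B') =
      ∑ t ∈ matchings A B, ∑ t' ∈ matchings A' B',
        mkB (A.comp B t) ⊗ₜ[ℂ] mkB (A'.comp B' t') := by
  rw [star2_tmul, starB_mkB hA hB, starB_mkB hA' hB', TensorProduct.sum_tmul]
  simp only [TensorProduct.tmul_sum]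

open scoped Classical in
theorem dfun_comp {A B : BD} {s : Finset (ℕ × ℕ)} (hA : A.Valid) (hB : B.Valid)
    (hs : IsPartialMatching A.HfUp B.HfDn s) :
    dfun ⟨A.comp B s, hA.comp hB hs⟩ =
      ∑ I ∈ (Icc 1 A.nv).powerset with A.Isolated I,
        ∑ J ∈ (Icc 1 B.nv).powerset with B.Isolated J,
          if Compatible A B I J s then
            mkB ((A.sub I).comp (B.sub J) (restrict A B I J s)) ⊗ₜ[ℂ]
              mkB ((A.sub (Icc 1 A.nv \ I)).comp (B.sub (Icc 1 B.nv \ J))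
                (restrict A B (Icc 1 A.nv \ I) (Icc 1 B.nv \ J) s))
          else 0 := by
  rw [dfun, sum_isolated_comp hA hB hs]
  refine sum_congr rfl fun I hI => sum_congr rfl fun J hJ => ?_
  have hK := isJoin_join (mem_powerset.1 (mem_filter.1 hI).1) (mem_powerset.1 (mem_filter.1 hJ).1)
  rw [sub_comp hA hB hs hK, nv_comp, sub_comp hA hB hs (hK.compl B.nv)]

theorem deltaL_mulfun (A B : BDiagram) : deltaL (mulfun A B) = star2 (dfun A) (dfun B) := by
  classical
  rw [deltaL, liftB_mulfun dfun A B fun s hs => dfun_comp A.2 B.2 hs, dfun, dfun, star2_sum_sum,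
    sum_comm]
  refine sum_congr rfl fun I hI => ?_
  rw [sum_comm]
  refine sum_congr rfl fun J hJ => ?_
  rw [← sum_filter, star2_mkB_tmul (A.2.sub _) (A.2.sub _) (B.2.sub _) (B.2.sub _),
    ← sum_compatible_matchings A.2 B.2 (mem_filter.1 hI).2 (mem_filter.1 hJ).2]

theorem deltaL_single (A : BDiagram) : deltaL (Finsupp.single A 1) = dfun A := liftB_single _ A

theorem counitB_single (A : BDiagram) :
    counitB (Finsupp.single A 1) = if A.1 = eps then 1 else 0 :=
  liftB_single _ A

theorem counitB_mulfun (A B : BDiagram) :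
    counitB (mulfun A B) = (if A.1 = eps then 1 else 0) * (if B.1 = eps then 1 else 0) := by
  rw [counitB, liftB_mulfun _ A B (F := fun _ => if A.1 = eps ∧ B.1 = eps then (1 : ℂ) else 0)
    fun s hs => if_congr (comp_eq_eps_iff A.2 B.2 hs) rfl rfl]
  by_cases hA : A.1 = eps
  · rw [hA, matchings_eps_left]
    simp
  · simp [hA]

end Bialgebra

/-- `Δ` and `ε*` are morphisms of algebras, where ℬ ⊗ ℬ carries the
componentwise product. -/
theorem deltaL_multiplicative :
    (∀ u v : BSpace, deltaL (starB u v) = star2 (deltaL u) (deltaL v)) ∧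
    (∀ u v : BSpace, counitB (starB u v) = counitB u * counitB v) := by
  have hdelta : starB.compr₂ deltaL = star2Hom.compl₁₂ deltaL deltaL :=
    bilin_ext_single fun A B => by
      simp only [LinearMap.compr₂_apply, LinearMap.compl₁₂_apply, starB_single, deltaL_mulfun,
        deltaL_single, star2Hom_apply]
  have hcounit : starB.compr₂ counitB = (LinearMap.mul ℂ ℂ).compl₁₂ counitB counitB :=
    bilin_ext_single fun A B => by
      simp only [LinearMap.compr₂_apply, LinearMap.compl₁₂_apply, starB_single, counitB_mulfun,
        counitB_single, LinearMap.mul_apply']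
  exact ⟨LinearMap.congr_fun₂ hdelta, LinearMap.congr_fun₂ hcounit⟩
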